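/- arXiv:1303.3345 — 2 statements merged into one kernel-verified Lean document; each statement's English description precedes it below -/
import Mathlib

section
/- Assume the base hypotheses and Condition (M). Suppose f ∈ RV₀(β) for some β > 1 and there exists L > 0 such that lim_{t→∞} g(t)/(f∘F⁻¹)(t) = L. Then the unique continuous solution x of x'(t) = -f(x(t)) + g(t), x(0) = ξ > 0, satisfies x(t) → 0 as t → ∞ and lim_{t→∞} F(x(t))/t = Λ*, where Λ* ∈ (0,1) is the unique solution of (1 - Λ*)·Λ*^{-β/(β-1)} = L. -/
open Filter Real Set Topology MeasureTheory

noncomputable section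

/-- A function `f : (0,∞) → (0,∞)` is regularly varying at `0` with index `β` if
`f(λx)/f(x) → λ^β` as `x → 0⁺` for every `λ > 0`. -/
def RVat0 (f : ℝ → ℝ) (β : ℝ) : Prop :=
  ∀ lam : ℝ, 0 < lam →
    Tendsto (fun x => f (lam * x) / f x) (nhdsWithin 0 (Set.Ioi 0)) (nhds (lam ^ β))

/-- A function `h : (0,∞) → (0,∞)` is regularly varying at `∞` with index `α` if
`h(λt)/h(t) → λ^α` as `t → ∞` for every `λ > 0`. -/
def RVatInf (h : ℝ → ℝ) (α : ℝ) : Prop :=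
  ∀ lam : ℝ, 0 < lam →
    Tendsto (fun t => h (lam * t) / h t) atTop (nhds (lam ^ α))

/-- A continuous solution of the perturbed ODE `x'(t) = -f(x(t)) + g(t)`, `t > 0`,
with initial condition `x(0) = ξ`. -/
def IsSol (f g : ℝ → ℝ) (ξ : ℝ) (x : ℝ → ℝ) : Prop :=
  ContinuousOn x (Set.Ici 0) ∧ x 0 = ξ ∧
    ∀ t : ℝ, 0 < t → HasDerivAt x (-f (x t) + g t) t

theorem aux_drop (z z' : ℝ → ℝ) (T c : ℝ) (hc : 0 < c)
    (hd : ∀ t, T ≤ t → HasDerivAt z (z' t) t)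
    (h : ∀ t, T ≤ t → 0 ≤ z t → z' t ≤ -c) : ∀ᶠ t in atTop, z t ≤ 0 := by
  have h1 : ∃ s, T ≤ s ∧ z s ≤ 0 := by
    by_contra hcon
    push Not at hcon
    have hanti : AntitoneOn (fun t => z t + c * t) (Set.Ici T) := by
      apply antitoneOn_of_deriv_nonpos (convex_Ici T)
      · intro t ht
        exact ((hd t ht).add ((hasDerivAt_id t).const_mul c)).continuousAt.continuousWithinAt
      · intro t ht
        rw [interior_Ici] at ht
        exact ((hd t (le_of_lt ht)).add
          ((hasDerivAt_id t).const_mul c)).differentiableAt.differentiableWithinAt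
      · intro t ht
        rw [interior_Ici] at ht
        have hT : T ≤ t := le_of_lt ht
        have := ((hd t hT).add ((hasDerivAt_id t).const_mul c)).deriv
        have h2 := h t hT (hcon t hT).le
        have h3 : deriv (fun t => z t + c * t) t = z' t + c * 1 := this
        rw [h3]; linarith
    have hzT := hcon T le_rfl
    have hle : T ≤ T + z T / c := by
      have : 0 < z T / c := by positivity
      linarith
    have h4 := hanti (Set.mem_Ici.2 le_rfl) (Set.mem_Ici.2 hle) hle
    have h5 := hcon _ hle
    have h6 : c * (T + z T / c) = c * T + z T := by field_simp
    simp only at h4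
    rw [h6] at h4
    linarith
  obtain ⟨s, hs, hzs⟩ := h1
  filter_upwards [eventually_ge_atTop s] with t ht
  have := image_le_of_deriv_right_lt_deriv_boundary' (f := z) (f' := z') (a := s) (b := t)
    (B := fun _ => 0) (B' := fun _ => 0)
    (fun u hu => (hd u (hs.trans hu.1)).continuousAt.continuousWithinAt)
    (fun u hu => (hd u (hs.trans hu.1)).hasDerivWithinAt) hzs continuousOn_const
    (fun u hu => hasDerivWithinAt_const _ _ _)
    (fun u hu he => by
      have := h u (hs.trans hu.1) he.ge
      linarith)
  exact this (Set.right_mem_Icc.2 ht)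

theorem aux_lh_upper (P Q P' Q' : ℝ → ℝ) (c c' : ℝ) (hcc : c < c')
    (hQ : Tendsto Q (𝓝[>] 0) atTop)
    (hP' : ∀ y, 0 < y → HasDerivAt P (P' y) y) (hQ' : ∀ y, 0 < y → HasDerivAt Q (Q' y) y)
    (h : ∀ᶠ y in 𝓝[>] (0:ℝ), c * Q' y ≤ P' y) : ∀ᶠ y in 𝓝[>] (0:ℝ), P y < c' * Q y := by
  obtain ⟨d, hd, hdd⟩ := mem_nhdsGT_iff_exists_Ioc_subset.1 h
  have hd0 : (0:ℝ) < d := hd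
  have hder : ∀ y, 0 < y → HasDerivAt (fun y => P y - c * Q y) (P' y - c * Q' y) y :=
    fun y hy => (hP' y hy).sub ((hQ' y hy).const_mul c)
  have hmono : MonotoneOn (fun y => P y - c * Q y) (Set.Ioc 0 d) := by
    apply monotoneOn_of_deriv_nonneg (convex_Ioc 0 d)
    · intro t ht
      exact (hder t ht.1).continuousAt.continuousWithinAt
    · intro t ht
      exact (hder t (interior_subset ht).1).differentiableAt.differentiableWithinAt
    · intro t ht
      rw [(hder t (interior_subset ht).1).deriv]
      have : c * Q' t ≤ P' t := hdd (interior_subset ht)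
      linarith
  filter_upwards [Ioc_mem_nhdsGT hd0, hQ.eventually_gt_atTop ((P d - c * Q d) / (c' - c))]
    with y hy hy2
  have h1 := hmono hy (Set.right_mem_Ioc.2 hd0) hy.2
  have h0 : 0 < c' - c := by linarith
  rw [div_lt_iff₀ h0] at hy2
  simp only at h1
  nlinarith

theorem aux_M (f φ : ℝ → ℝ) (δ : ℝ) (hδ : 0 < δ) (hf : ∀ y, 0 < y → 0 < f y)
    (hφ : StrictMonoOn φ (Set.Ioo 0 δ))
    (h : Tendsto (fun y => f y / φ y) (𝓝[>] 0) (𝓝 1)) (K : ℝ) (hK : 1 < K) :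
    ∃ d, 0 < d ∧ ∀ u v, 0 < u → u ≤ v → v < d → f u ≤ K * f v := by
  have hK0 : 0 < K := by linarith
  have hs : 1 < √K := Real.lt_sqrt_of_sq_lt (by simpa using hK)
  have hs0 : 0 < √K := by linarith
  have hss : √K * √K = K := Real.mul_self_sqrt hK0.le
  have hi : (√K)⁻¹ < 1 := inv_lt_one_of_one_lt₀ hs
  have e := (h.eventually_lt_const hs).and (h.eventually_const_lt hi)
  obtain ⟨d, hd, hdd⟩ := mem_nhdsGT_iff_exists_Ioo_subset.1 e
  have hd0 : (0:ℝ) < d := hd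
  have key : ∀ y, 0 < y → y < d → 0 < φ y ∧ f y ≤ √K * φ y ∧ φ y ≤ √K * f y := by
    intro y hy hyd
    obtain ⟨h1, h2⟩ := hdd ⟨hy, hyd⟩
    have hfy := hf y hy
    have hi0 : 0 < (√K)⁻¹ := by positivity
    have hp : 0 < φ y := by
      by_contra hn
      have : f y / φ y ≤ 0 := div_nonpos_of_nonneg_of_nonpos hfy.le (not_lt.1 hn)
      linarith
    rw [div_lt_iff₀ hp] at h1
    rw [lt_div_iff₀ hp, inv_mul_lt_iff₀ hs0] at h2
    exact ⟨hp, h1.le, h2.le⟩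
  refine ⟨min d δ, lt_min hd0 hδ, fun u v hu huv hv => ?_⟩
  have hvd := hv.trans_le (min_le_left _ _)
  have hvδ := hv.trans_le (min_le_right _ _)
  obtain ⟨_, a1, _⟩ := key u hu (huv.trans_lt hvd)
  obtain ⟨_, _, a2⟩ := key v (hu.trans_le huv) hvd
  have a3 := hφ.monotoneOn ⟨hu, huv.trans_lt hvδ⟩ ⟨hu.trans_le huv, hvδ⟩ huv
  calc f u ≤ √K * φ u := a1
    _ ≤ √K * (√K * f v) := by gcongr; exact a3.trans a2
    _ = K * f v := by rw [← mul_assoc, hss]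

theorem aux_Lambda (β L : ℝ) (hβ : 1 < β) (hL : 0 < L) :
    ∃ Λ : ℝ, Λ ∈ Set.Ioo (0:ℝ) 1 ∧ (1 - Λ) * Λ ^ (-β / (β - 1)) = L ∧
      (∀ Λ' ∈ Set.Ioo (0:ℝ) 1, (1 - Λ') * Λ' ^ (-β / (β - 1)) = L → Λ' = Λ) := by
  set p := β / (β - 1) with hp
  have hb : 0 < β - 1 := by linarith
  have hp0 : 0 < p := by positivity
  have heq : ∀ l : ℝ, 0 < l → ((1 - l) * l ^ (-β / (β - 1)) = L ↔ l + L * l ^ p = 1) := by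
    intro l hl
    have : 0 < l ^ p := by positivity
    rw [neg_div, ← hp, Real.rpow_neg hl.le]
    rw [← div_eq_mul_inv, div_eq_iff this.ne']
    constructor <;> intro h <;> linarith
  have hsm : StrictMonoOn (fun l : ℝ => l + L * l ^ p) (Set.Ici 0) := by
    intro a ha b hb hab
    have := Real.rpow_lt_rpow ha hab hp0
    simp only
    gcongr
  have hcont : ContinuousOn (fun l : ℝ => l + L * l ^ p) (Set.Icc 0 1) := by
    apply Continuous.continuousOn
    have := Real.continuous_rpow_const hp0.le
    fun_prop
  have hmem : (1:ℝ) ∈ (fun l : ℝ => l + L * l ^ p) '' Set.Ioo 0 1 := by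
    apply intermediate_value_Ioo zero_le_one hcont
    simp [Real.zero_rpow hp0.ne', hL]
  obtain ⟨l, hl, hl1⟩ := hmem
  refine ⟨l, hl, (heq l hl.1).2 hl1, fun l' hl' h' => ?_⟩
  have := (heq l' hl'.1).1 h'
  exact hsm.injOn hl'.1.le hl.1.le (this.trans hl1.symm)

theorem aux_Fderiv (f F : ℝ → ℝ) (hf_cont : Continuous f) (hfp : ∀ y, 0 < y → 0 < f y)
    (hF : ∀ y : ℝ, 0 < y → F y = ∫ u in y..(1:ℝ), 1 / f u) (y : ℝ) (hy : 0 < y) :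
    HasDerivAt F (-(1 / f y)) y := by
  have hco : ContinuousOn (fun u => 1 / f u) (Set.Ioi 0) :=
    continuousOn_const.div hf_cont.continuousOn (fun u hu => (hfp u hu).ne')
  have hint : IntervalIntegrable (fun u => 1 / f u) volume y 1 := by
    apply ContinuousOn.intervalIntegrable
    apply hco.mono
    intro u hu
    exact lt_of_lt_of_le (lt_min hy one_pos) hu.1
  have h1 := intervalIntegral.integral_hasDerivAt_left hint
    (hco.stronglyMeasurableAtFilter isOpen_Ioi y hy) (hco.continuousAt (Ioi_mem_nhds hy))
  apply h1.congr_of_eventuallyEq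
  filter_upwards [Ioi_mem_nhds hy] with u hu
  exact hF u hu

theorem aux_Finv_deriv (f F Finv : ℝ → ℝ) (hfp : ∀ y, 0 < y → 0 < f y)
    (hFd : ∀ y, 0 < y → HasDerivAt F (-(1 / f y)) y)
    (hF_anti : StrictAntiOn F (Set.Ioi 0))
    (hFinv : ∀ t : ℝ, 0 ≤ t → 0 < Finv t ∧ F (Finv t) = t) (t : ℝ) (ht : 0 < t) :
    HasDerivAt Finv (-f (Finv t)) t := by
  obtain ⟨ha, hFa⟩ := hFinv t ht.le
  have hc : ContinuousAt Finv t := by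
    apply tendsto_order.2
    constructor
    · intro b hb
      have hb' : max b (Finv t / 2) < Finv t := max_lt hb (by linarith)
      have hb0 : 0 < max b (Finv t / 2) := lt_max_of_lt_right (by linarith)
      have h1 := hF_anti hb0 ha hb'
      rw [hFa] at h1
      filter_upwards [Iio_mem_nhds h1, Ioi_mem_nhds ht] with s hs hs0
      obtain ⟨q, q1⟩ := hFinv s (le_of_lt hs0)
      rw [Set.mem_Iio, ← q1] at hs
      exact (le_max_left _ _).trans_lt ((hF_anti.lt_iff_gt q hb0).1 hs)
    · intro b hb
      have hb0 : 0 < b := ha.trans hb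
      have h1 := hF_anti ha hb0 hb
      rw [hFa] at h1
      filter_upwards [Ioi_mem_nhds h1, Ioi_mem_nhds ht] with s hs hs0
      obtain ⟨q, q1⟩ := hFinv s (le_of_lt hs0)
      rw [Set.mem_Ioi, ← q1] at hs
      exact (hF_anti.lt_iff_gt hb0 q).1 hs
  have hne : -(1 / f (Finv t)) ≠ 0 := by
    have := hfp _ ha
    have : 0 < 1 / f (Finv t) := by positivity
    linarith
  have h := (hFd _ ha).of_local_left_inverse hc hne (by
    filter_upwards [Ioi_mem_nhds ht] with s hs
    exact (hFinv s (le_of_lt hs)).2)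
  have e : (-(1 / f (Finv t)))⁻¹ = -f (Finv t) := by rw [inv_neg, one_div, inv_inv]
  rwa [e] at h

theorem aux_FRV (f F : ℝ → ℝ) (hfp : ∀ y, 0 < y → 0 < f y)
    (hFd : ∀ y, 0 < y → HasDerivAt F (-(1 / f y)) y)
    (hF_top : Tendsto F (nhdsWithin 0 (Set.Ioi 0)) atTop) (β : ℝ) (hfRV : RVat0 f β)
    (m : ℝ) (hm : 0 < m) :
    Tendsto (fun y => F (m * y) / F y) (𝓝[>] 0) (𝓝 (m ^ (1 - β))) := by
  have hP : ∀ y, 0 < y → HasDerivAt (fun y => F (m * y)) (-(m / f (m * y))) y := by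
    intro y hy
    have := (hFd (m * y) (by positivity)).comp y ((hasDerivAt_id y).const_mul m)
    have e : -(1 / f (m * y)) * (m * 1) = -(m / f (m * y)) := by ring
    exact e ▸ this
  have hr : Tendsto (fun y => m * (f (m * y) / f y)⁻¹) (𝓝[>] 0) (𝓝 (m ^ (1 - β))) := by
    have h1 := ((hfRV m hm).inv₀ (by positivity)).const_mul m
    have : m * (m ^ β)⁻¹ = m ^ (1 - β) := by
      rw [Real.rpow_sub hm, Real.rpow_one, div_eq_mul_inv]
    rwa [this] at h1
  apply tendsto_order.2
  constructor
  · intro c hc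
    obtain ⟨c1, h1, h2⟩ := exists_between hc
    have := aux_lh_upper (fun y => -F (m * y)) F (fun y => -(-(m / f (m * y))))
      (fun y => -(1 / f y)) (-c1) (-c) (by linarith) hF_top (fun y hy => (hP y hy).neg) hFd (by
        filter_upwards [hr.eventually_const_lt h2, self_mem_nhdsWithin] with y hy hy0
        have q1 := hfp y hy0
        have q2 := hfp (m * y) (mul_pos hm hy0)
        rw [inv_div, ← mul_div_assoc, lt_div_iff₀ q2] at hy
        rw [neg_neg, neg_mul_neg, mul_one_div, div_le_div_iff₀ q1 q2]
        exact hy.le)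
    filter_upwards [this, hF_top.eventually_gt_atTop 0] with y hy hy2
    rw [lt_div_iff₀ hy2]
    linarith
  · intro c hc
    obtain ⟨c1, h1, h2⟩ := exists_between hc
    have := aux_lh_upper (fun y => F (m * y)) F (fun y => (-(m / f (m * y))))
      (fun y => -(1 / f y)) c1 c (by linarith) hF_top hP hFd (by
        filter_upwards [hr.eventually_lt_const h1, self_mem_nhdsWithin] with y hy hy0
        have q1 := hfp y hy0
        have q2 := hfp (m * y) (mul_pos hm hy0)
        rw [inv_div, ← mul_div_assoc, div_lt_iff₀ q2] at hy
        rw [mul_neg, neg_le_neg_iff, mul_one_div, div_le_div_iff₀ q2 q1]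
        exact hy.le)
    filter_upwards [this, hF_top.eventually_gt_atTop 0] with y hy hy2
    rw [div_lt_iff₀ hy2]
    linarith

theorem aux_x_pos (f g x : ℝ → ℝ) (ξ : ℝ) (hf_zero : f 0 = 0)
    (hg_pos : ∀ t : ℝ, 0 < t → 0 < g t) (hξ : 0 < ξ) (hx : IsSol f g ξ x) :
    ∀ᶠ t in atTop, 0 < x t := by
  obtain ⟨hxc, hx0, hxd⟩ := hx
  obtain ⟨s, hs, hxs⟩ : ∃ s, 0 < s ∧ 0 < x s := by
    have h1 : Tendsto x (𝓝[>] 0) (𝓝 ξ) := by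
      have := hxc 0 (Set.mem_Ici.2 le_rfl)
      rw [ContinuousWithinAt, hx0] at this
      exact this.mono_left (nhdsWithin_mono _ Set.Ioi_subset_Ici_self)
    obtain ⟨s, h1, h2⟩ := ((h1.eventually_const_lt hξ).and self_mem_nhdsWithin).exists
    exact ⟨s, h2, h1⟩
  have hnn : ∀ t, s ≤ t → 0 ≤ x t := by
    intro t ht
    have := image_le_of_deriv_right_lt_deriv_boundary' (f := fun t => - x t)
      (f' := fun t => -(-f (x t) + g t)) (a := s) (b := t)
      (B := fun _ => 0) (B' := fun _ => 0)
      (fun u hu => (hxd u (hs.trans_le hu.1)).neg.continuousAt.continuousWithinAt)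
      (fun u hu => (hxd u (hs.trans_le hu.1)).neg.hasDerivWithinAt) (by linarith)
      continuousOn_const (fun u hu => hasDerivWithinAt_const _ _ _)
      (fun u hu he => by
        have h0 : x u = 0 := by linarith
        have := hg_pos u (hs.trans_le hu.1)
        simp only [h0, hf_zero]
        linarith)
    have := this (Set.right_mem_Icc.2 ht)
    linarith
  filter_upwards [eventually_gt_atTop s] with t ht
  refine lt_of_le_of_ne (hnn t ht.le) (fun he => ?_)
  have hmin : IsLocalMin x t := by
    filter_upwards [Ioi_mem_nhds ht] with u hu
    rw [← he]
    exact hnn u (le_of_lt hu)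
  have ht0 := hs.trans ht
  have h1 := hmin.hasDerivAt_eq_zero (hxd t ht0)
  rw [← he, hf_zero] at h1
  have := hg_pos t ht0
  linarith

theorem aux_x_to0 (f g Finv x : ℝ → ℝ) (hf_cont : Continuous f) (hf_zero : f 0 = 0)
    (hfp : ∀ y, 0 < y → 0 < f y)
    (hFp : ∀ t, 0 ≤ t → 0 < Finv t)
    (hFid : ∀ t, 0 < t → HasDerivAt Finv (-f (Finv t)) t)
    (hFinv_to0 : Tendsto Finv atTop (nhds 0))
    (hxd : ∀ t : ℝ, 0 < t → HasDerivAt x (-f (x t) + g t) t)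
    (hxp : ∀ᶠ t in atTop, 0 < x t) (L : ℝ) (hLpos : 0 < L)
    (hL : Tendsto (fun t => g t / f (Finv t)) atTop (nhds L)) : Tendsto x atTop (𝓝 0) := by
  have hfF : Tendsto (fun t => f (Finv t)) atTop (𝓝 0) := by
    have := (hf_cont.tendsto 0).comp hFinv_to0
    rwa [hf_zero] at this
  have hg0 : Tendsto g atTop (𝓝 0) := by
    have := hL.mul hfF
    rw [mul_zero] at this
    apply this.congr'
    filter_upwards [eventually_ge_atTop 0] with t ht
    exact div_mul_cancel₀ _ (hfp _ (hFp t ht)).ne'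
  obtain ⟨T, hT⟩ := eventually_atTop.1 ((hxp.and (hL.eventually_lt_const (lt_add_one L))).and
    (eventually_gt_atTop 0))
  have hder : ∀ t, T ≤ t → HasDerivAt (fun t => x t + (L + 1) * Finv t)
      (-f (x t) + g t + (L + 1) * (-f (Finv t))) t := fun t ht =>
    (hxd t (hT t ht).2).add ((hFid t (hT t ht).2).const_mul _)
  have hanti : AntitoneOn (fun t => x t + (L + 1) * Finv t) (Set.Ici T) := by
    apply antitoneOn_of_deriv_nonpos (convex_Ici T)
    · intro t ht
      exact (hder t ht).continuousAt.continuousWithinAt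
    · intro t ht
      exact (hder t (interior_subset ht)).differentiableAt.differentiableWithinAt
    · intro t ht
      have ht := interior_subset ht
      rw [(hder t ht).deriv]
      obtain ⟨⟨h1, h2⟩, h3⟩ := hT t ht
      rw [div_lt_iff₀ (hfp _ (hFp t h3.le))] at h2
      have := hfp _ h1
      linarith
  have hconv : ∃ l, Tendsto (fun t => x t + (L + 1) * Finv t) atTop (𝓝 l) := by
    have hA : Antitone (fun t => x (max t T) + (L + 1) * Finv (max t T)) := by
      intro a b hab
      exact hanti (Set.mem_Ici.2 (le_max_right _ _)) (Set.mem_Ici.2 (le_max_right _ _))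
        (max_le_max_right T hab)
    have hB : BddBelow (Set.range (fun t => x (max t T) + (L + 1) * Finv (max t T))) := by
      refine ⟨0, ?_⟩
      rintro _ ⟨t, rfl⟩
      obtain ⟨⟨h1, h2⟩, h3⟩ := hT (max t T) (le_max_right _ _)
      have := hFp _ h3.le
      positivity
    refine ⟨_, (tendsto_atTop_ciInf hA hB).congr' ?_⟩
    filter_upwards [eventually_ge_atTop T] with t ht
    rw [max_eq_left ht]
  obtain ⟨l, hl⟩ := hconv
  have hxl : Tendsto x atTop (𝓝 l) := by
    have := hl.sub (hFinv_to0.const_mul (L + 1))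
    simpa using this
  have hl0 : 0 ≤ l := ge_of_tendsto hxl (hxp.mono fun t h => h.le)
  rcases hl0.eq_or_lt with h | h
  · rwa [h]
  exfalso
  have hfl := hfp l h
  have hd : Tendsto (fun t => -f (x t) + g t) atTop (𝓝 (-f l)) := by
    have := (((hf_cont.tendsto l).comp hxl).neg).add hg0
    simpa using this
  obtain ⟨S, hS⟩ := eventually_atTop.1 ((hd.eventually_lt_const
    (show -f l < -(f l / 2) by linarith)).and (eventually_gt_atTop 0))
  have := aux_drop x (fun t => -f (x t) + g t) S (f l / 2) (by positivity)
    (fun t ht => hxd t (hS t ht).2) (fun t ht _ => (hS t ht).1.le)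
  obtain ⟨t, h1, h2⟩ := (this.and hxp).exists
  linarith

theorem stmt_2
    (f g F Finv : ℝ → ℝ) (ξ : ℝ) (x : ℝ → ℝ)
    (hf_cont : Continuous f) (hf_lip : LocallyLipschitz f)
    (hf_sign : ∀ y : ℝ, y ≠ 0 → 0 < y * f y) (hf_zero : f 0 = 0)
    (hg_cont : ContinuousOn g (Set.Ici 0)) (hg_pos : ∀ t : ℝ, 0 < t → 0 < g t)
    (hF : ∀ y : ℝ, 0 < y → F y = ∫ u in y..(1:ℝ), 1 / f u)
    (hF_top : Tendsto F (nhdsWithin 0 (Set.Ioi 0)) atTop)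
    (hF_anti : StrictAntiOn F (Set.Ioi 0))
    (hFinv : ∀ t : ℝ, 0 ≤ t → 0 < Finv t ∧ F (Finv t) = t)
    (hFinv_to0 : Tendsto Finv atTop (nhds 0))
    (hξ : 0 < ξ) (hx : IsSol f g ξ x)
    (hM : ∃ δ : ℝ, 0 < δ ∧ ∃ φ : ℝ → ℝ, StrictMonoOn φ (Set.Ioo 0 δ) ∧
      Tendsto (fun y => f y / φ y) (nhdsWithin 0 (Set.Ioi 0)) (nhds 1))
    (β : ℝ) (hβ : 1 < β) (hfRV : RVat0 f β)
    (L : ℝ) (hLpos : 0 < L)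
    (hL : Tendsto (fun t => g t / f (Finv t)) atTop (nhds L)) :
    Tendsto x atTop (nhds 0) ∧
    ∃ Λ : ℝ, Λ ∈ Set.Ioo (0:ℝ) 1 ∧ (1 - Λ) * Λ ^ (-β / (β - 1)) = L ∧
      (∀ Λ' ∈ Set.Ioo (0:ℝ) 1, (1 - Λ') * Λ' ^ (-β / (β - 1)) = L → Λ' = Λ) ∧
      Tendsto (fun t => F (x t) / t) atTop (nhds Λ) := by
  have hfp : ∀ y, 0 < y → 0 < f y := fun y hy => (pos_iff_pos_of_mul_pos (hf_sign y hy.ne')).1 hy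
  have hFd := aux_Fderiv f F hf_cont hfp hF
  have hFid := aux_Finv_deriv f F Finv hfp hFd hF_anti hFinv
  have hxp := aux_x_pos f g x ξ hf_zero hg_pos hξ hx
  have hx0 := aux_x_to0 f g Finv x hf_cont hf_zero hfp (fun t ht => (hFinv t ht).1) hFid
    hFinv_to0 hx.2.2 hxp L hLpos hL
  refine ⟨hx0, ?_⟩
  obtain ⟨Λ, hΛ, hΛe, hΛu⟩ := aux_Lambda β L hβ hLpos
  refine ⟨Λ, hΛ, hΛe, hΛu, ?_⟩
  obtain ⟨δ, hδ, φ, hφ, hfφ⟩ := hM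
  have hMl := aux_M f φ δ hδ hfp hφ hfφ
  have hb : 0 < β - 1 := by linarith
  -- the critical ratio
  obtain ⟨M, hM0, hM1, hM2⟩ : ∃ M : ℝ, 0 < M ∧ M ^ (1 - β) = Λ ∧ (1 - Λ) * M ^ β = L := by
    refine ⟨Λ ^ (-1 / (β - 1)), Real.rpow_pos_of_pos hΛ.1 _, ?_, ?_⟩
    · rw [← Real.rpow_mul hΛ.1.le]
      have : -1 / (β - 1) * (1 - β) = 1 := by field_simp; ring
      rw [this, Real.rpow_one]
    · rw [← Real.rpow_mul hΛ.1.le]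
      have : -1 / (β - 1) * β = -β / (β - 1) := by ring
      rw [this, hΛe]
  have hcontM : Tendsto (fun m : ℝ => m ^ (1 - β)) (𝓝 M) (𝓝 Λ) := by
    have := (Real.continuousAt_rpow_const M (1 - β) (Or.inl hM0.ne'))
    rwa [ContinuousAt, hM1] at this
  -- filters
  have ha : Tendsto Finv atTop (𝓝[>] 0) := tendsto_nhdsWithin_iff.2 ⟨hFinv_to0, by
    filter_upwards [eventually_ge_atTop 0] with t ht using (hFinv t ht).1⟩
  have hx0' : Tendsto x atTop (𝓝[>] 0) := tendsto_nhdsWithin_iff.2 ⟨hx0, hxp⟩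
  have hyd : ∀ t, 0 < t → 0 < x t → HasDerivAt (fun t => F (x t)) (1 - g t / f (x t)) t := by
    intro t ht hxt
    have h1 := (hFd (x t) hxt).comp t (hx.2.2 t ht)
    have hne := (hfp _ hxt).ne'
    have e : -(1 / f (x t)) * (-f (x t) + g t) = 1 - g t / f (x t) := by
      field_simp
      ring
    exact e ▸ h1
  have hratio : ∀ m, 0 < m → Tendsto (fun t => (g t / f (Finv t)) / (f (m * Finv t) / f (Finv t)))
      atTop (𝓝 (L / m ^ β)) := by
    intro m hm
    exact hL.div ((hfRV m hm).comp ha) (by positivity)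
  have hFr : ∀ m, 0 < m → Tendsto (fun t => F (m * Finv t) / t) atTop (𝓝 (m ^ (1 - β))) := by
    intro m hm
    apply ((aux_FRV f F hfp hFd hF_top β hfRV m hm).comp ha).congr'
    filter_upwards [eventually_ge_atTop 0] with t ht
    simp only [Function.comp]
    rw [(hFinv t ht).2]
  have hma : ∀ m : ℝ, Tendsto (fun t => m * Finv t) atTop (𝓝 0) := by
    intro m
    simpa using hFinv_to0.const_mul m
  apply tendsto_order.2
  constructor
  · intro c hc
    obtain ⟨l, hl1, hl2⟩ := exists_between (max_lt hc hΛ.1)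
    have hcl : c < l := (le_max_left _ _).trans_lt hl1
    have hl0 : 0 < l := (le_max_right _ _).trans_lt hl1
    obtain ⟨m, hmM, hml⟩ : ∃ m, M < m ∧ l < m ^ (1 - β) := by
      have h1 := (hcontM.mono_left nhdsWithin_le_nhds : Tendsto _ (𝓝[>] M) _).eventually_const_lt hl2
      obtain ⟨m, h1, h2⟩ := (h1.and self_mem_nhdsWithin).exists
      exact ⟨m, h2, h1⟩
    have hm0 := hM0.trans hmM
    have hLm : L / m ^ β < 1 - Λ := by
      rw [div_lt_iff₀ (by positivity), ← hM2]
      have := Real.rpow_lt_rpow hM0.le hmM (by linarith : 0 < β)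
      have h2 : 0 < 1 - Λ := by linarith [hΛ.2]
      gcongr
    obtain ⟨K, hK1, hKL⟩ : ∃ K : ℝ, 1 < K ∧ K * (L / m ^ β) < 1 - Λ := by
      have h1 : Tendsto (fun K : ℝ => K * (L / m ^ β)) (𝓝[>] 1) (𝓝 (1 * (L / m ^ β))) :=
        (tendsto_id.mul_const _).mono_left nhdsWithin_le_nhds
      rw [one_mul] at h1
      obtain ⟨K, h1, h2⟩ := ((h1.eventually_lt_const hLm).and self_mem_nhdsWithin).exists
      exact ⟨K, h2, h1⟩
    obtain ⟨d, hd, hdd⟩ := hMl K hK1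
    have hev : ∀ᶠ t in atTop, 0 < t ∧ 0 < x t ∧ (F (x t) ≤ l * t → Λ ≤ 1 - g t / f (x t)) := by
      filter_upwards [eventually_gt_atTop 0, hxp, hx0.eventually_lt_const hd,
        (hFr m hm0).eventually_const_lt hml,
        ((hratio m hm0).const_mul K).eventually_lt_const hKL] with t ht hxt hxd h1 h2
      refine ⟨ht, hxt, fun h3 => ?_⟩
      have ha0 := (hFinv t ht.le).1
      have hma0 : 0 < m * Finv t := by positivity
      rw [lt_div_iff₀ ht] at h1
      have h4 : m * Finv t < x t := (hF_anti.lt_iff_gt hxt hma0).1 (h3.trans_lt h1)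
      have h5 := hdd _ _ hma0 h4.le hxd
      have q1 := hfp _ ha0
      have q2 := hfp _ hma0
      have q3 := hfp _ hxt
      have q4 := hg_pos t ht
      rw [div_div_div_cancel_right₀ q1.ne'] at h2
      have : g t / f (x t) ≤ K * (g t / f (m * Finv t)) := by
        rw [← mul_div_assoc, div_le_div_iff₀ q3 q2]
        nlinarith
      linarith
    obtain ⟨T, hT⟩ := eventually_atTop.1 hev
    have := aux_drop (fun t => l * t - F (x t)) (fun t => l * 1 - (1 - g t / f (x t))) T (Λ - l)
      (by linarith)
      (fun t ht => ((hasDerivAt_id t).const_mul l).sub (hyd t (hT t ht).1 (hT t ht).2.1))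
      (fun t ht h => by
        have := (hT t ht).2.2 (by linarith)
        linarith)
    filter_upwards [this, eventually_gt_atTop 0] with t h1 h2
    rw [lt_div_iff₀ h2]
    have : c * t < l * t := by gcongr
    linarith
  · intro c hc
    obtain ⟨l, hl2, hcl⟩ := exists_between hc
    obtain ⟨m, hm0, hmM, hml⟩ : ∃ m, 0 < m ∧ m < M ∧ m ^ (1 - β) < l := by
      have h1 := (hcontM.mono_left nhdsWithin_le_nhds : Tendsto _ (𝓝[<] M) _).eventually_lt_const hl2
      have h3 : ∀ᶠ m in 𝓝[<] M, 0 < m := nhdsWithin_le_nhds (Ioi_mem_nhds hM0)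
      obtain ⟨m, ⟨h1, h3⟩, h2⟩ := ((h1.and h3).and self_mem_nhdsWithin).exists
      exact ⟨m, h3, h2, h1⟩
    have hLm : 1 - Λ < L / m ^ β := by
      rw [lt_div_iff₀ (by positivity), ← hM2]
      have := Real.rpow_lt_rpow hm0.le hmM (by linarith : 0 < β)
      have h2 : 0 < 1 - Λ := by linarith [hΛ.2]
      gcongr
    obtain ⟨K, hK1, hKL⟩ : ∃ K : ℝ, 1 < K ∧ K * (1 - Λ) < L / m ^ β := by
      have h1 : Tendsto (fun K : ℝ => K * (1 - Λ)) (𝓝[>] 1) (𝓝 (1 * (1 - Λ))) :=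
        (tendsto_id.mul_const _).mono_left nhdsWithin_le_nhds
      rw [one_mul] at h1
      obtain ⟨K, h1, h2⟩ := ((h1.eventually_lt_const hLm).and self_mem_nhdsWithin).exists
      exact ⟨K, h2, h1⟩
    obtain ⟨d, hd, hdd⟩ := hMl K hK1
    have hev : ∀ᶠ t in atTop, 0 < t ∧ 0 < x t ∧ (l * t ≤ F (x t) → 1 - g t / f (x t) ≤ Λ) := by
      filter_upwards [eventually_gt_atTop 0, hxp, (hma m).eventually_lt_const hd,
        (hFr m hm0).eventually_lt_const hml,
        (hratio m hm0).eventually_const_lt hKL] with t ht hxt hxd h1 h2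
      refine ⟨ht, hxt, fun h3 => ?_⟩
      have ha0 := (hFinv t ht.le).1
      have hma0 : 0 < m * Finv t := by positivity
      rw [div_lt_iff₀ ht] at h1
      have h4 : x t < m * Finv t := (hF_anti.lt_iff_gt hma0 hxt).1 (h1.trans_le h3)
      have h5 := hdd _ _ hxt h4.le hxd
      have q1 := hfp _ ha0
      have q2 := hfp _ hma0
      have q3 := hfp _ hxt
      have q4 := hg_pos t ht
      rw [div_div_div_cancel_right₀ q1.ne', lt_div_iff₀ q2] at h2
      have h6 : 0 < 1 - Λ := by linarith [hΛ.2]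
      have : 1 - Λ ≤ g t / f (x t) := by
        rw [le_div_iff₀ q3]
        have := mul_le_mul_of_nonneg_left h5 h6.le
        linarith
      linarith
    obtain ⟨T, hT⟩ := eventually_atTop.1 hev
    have := aux_drop (fun t => F (x t) - l * t) (fun t => (1 - g t / f (x t)) - l * 1) T (l - Λ)
      (by linarith)
      (fun t ht => (hyd t (hT t ht).1 (hT t ht).2.1).sub ((hasDerivAt_id t).const_mul l))
      (fun t ht h => by
        have := (hT t ht).2.2 (by linarith)
        linarith)
    filter_upwards [this, eventually_gt_atTop 0] with t h1 h2
    rw [div_lt_iff₀ h2]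
    have : l * t < c * t := by gcongr
    linarith
end
end

section
/- Assume the base hypotheses. Suppose lim_{t→∞} g(t)/(f∘F⁻¹)(t) = +∞, f ∈ RV₀(β) for some β > 1, g ∈ RV_∞(-θ) for some θ > 0, and the unique continuous solution x of x'(t) = -f(x(t)) + g(t), x(0) = ξ > 0, satisfies x(t) → 0 as t → ∞. Then lim_{t→∞} f(x(t))/g(t) = 1. -/
open Filter Real Set Topology MeasureTheory

noncomputable section

lemma slow_osc (H : ℝ → ℝ) (hH : Continuous H) (α : ℝ)
    (h : ∀ u, Tendsto (fun s => H (s + u) - H s) atTop (𝓝 (α * u))) (ε : ℝ) (hε : 0 < ε) :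
    ∃ δ > 0, ∃ N : ℝ, ∀ s ≥ N, ∀ v, 0 ≤ v → v ≤ δ → |H (s + v) - H s| ≤ ε := by
  let A : ℕ → Set ℝ := fun n => {u | ∀ s : ℝ, (n : ℝ) ≤ s → |H (s + u) - H s - α * u| ≤ ε / 3}
  have hA : ∀ n, IsClosed (A n) := by
    intro n
    have : A n = ⋂ s : ℝ, ⋂ _ : (n : ℝ) ≤ s, {u | |H (s + u) - H s - α * u| ≤ ε / 3} := by
      ext u; simp [A]
    rw [this]
    refine isClosed_iInter fun s => isClosed_iInter fun _ => ?_
    exact isClosed_le (by fun_prop) continuous_const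
  have hU : (⋃ n, A n) = univ := by
    refine eq_univ_of_forall fun u => ?_
    have h1 := (Metric.tendsto_nhds.1 (h u)) (ε / 3) (by positivity)
    obtain ⟨N, hN⟩ := eventually_atTop.1 h1
    obtain ⟨n, hn⟩ := exists_nat_ge N
    refine mem_iUnion.2 ⟨n, fun s hs => ?_⟩
    have := hN s (hn.trans hs)
    rw [Real.dist_eq] at this
    exact this.le
  obtain ⟨n, u0, hu0⟩ := nonempty_interior_of_iUnion_of_closed hA hU
  obtain ⟨ρ, hρ, hb⟩ := Metric.isOpen_iff.1 isOpen_interior u0 hu0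
  have hb' : ∀ v, 0 ≤ v → v ≤ ρ / 2 → u0 + v ∈ A n := by
    intro v h0 h1
    refine interior_subset (hb ?_)
    rw [Metric.mem_ball, Real.dist_eq, add_sub_cancel_left, abs_of_nonneg h0]
    linarith
  refine ⟨min (ρ / 2) (ε / (3 * (|α| + 1))), by positivity, n + u0, fun s hs v h0 h1 => ?_⟩
  have e1 := hb' v h0 (h1.trans (min_le_left _ _)) (s - u0) (by linarith)
  have e2 := hb' 0 le_rfl (by positivity) (s - u0) (by linarith)
  have e3 : |α * v| ≤ ε / 3 := by
    rw [abs_mul, abs_of_nonneg h0]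
    have := h1.trans (min_le_right _ _)
    rw [le_div_iff₀ (by positivity)] at this
    nlinarith [abs_nonneg α]
  rw [show s - u0 + (u0 + v) = s + v by ring] at e1
  rw [show s - u0 + (u0 + 0) = s by ring] at e2
  rw [abs_le] at *
  constructor <;> linarith [e1.1, e1.2, e2.1, e2.2, e3.1, e3.2]

lemma g_slow (g : ℝ → ℝ) (hg_cont : ContinuousOn g (Set.Ici 0)) (hg_pos : ∀ t : ℝ, 0 < t → 0 < g t)
    (θ : ℝ) (hgRV : RVatInf g (-θ)) (η : ℝ) (hη : 0 < η) :
    ∃ r > 1, ∀ᶠ t in atTop, ∀ s, t ≤ s → s ≤ r * t → g t ≤ (1 + η) * g s ∧ g s ≤ (1 + η) * g t := by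
  have hc : Continuous (fun s => Real.log (g (Real.exp s))) := by
    refine Continuous.log ?_ (fun s => (hg_pos _ (Real.exp_pos s)).ne')
    exact hg_cont.comp_continuous Real.continuous_exp (fun s => (Real.exp_pos s).le)
  obtain ⟨δ, hδ, N, hN⟩ := slow_osc _ hc (-θ) (by
    intro u
    have h1 := (hgRV (Real.exp u) (Real.exp_pos u)).comp Real.tendsto_exp_atTop
    have h2 := h1.log (by positivity)
    rw [Real.log_rpow (Real.exp_pos u), Real.log_exp] at h2
    refine h2.congr fun s => ?_
    simp only [Function.comp]
    rw [Real.log_div (hg_pos _ (by positivity)).ne' (hg_pos _ (by positivity)).ne',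
      ← Real.exp_add, add_comm]) (Real.log (1 + η)) (Real.log_pos (by linarith))
  refine ⟨Real.exp δ, Real.one_lt_exp_iff.2 hδ, ?_⟩
  filter_upwards [eventually_ge_atTop (Real.exp N)] with t ht s hts hs
  have t0 : 0 < t := (Real.exp_pos N).trans_le ht
  have s0 : 0 < s := t0.trans_le hts
  have := hN (Real.log t) ((Real.le_log_iff_exp_le t0).2 ht) (Real.log s - Real.log t)
    (sub_nonneg.2 (Real.log_le_log t0 hts)) (by
      have := Real.log_le_log s0 hs
      rw [Real.log_mul (by positivity) t0.ne', Real.log_exp] at this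
      linarith)
  rw [add_sub_cancel, Real.exp_log s0, Real.exp_log t0, abs_le] at this
  have gt := hg_pos t t0
  have gs := hg_pos s s0
  have p : 0 < 1 + η := by linarith
  constructor
  · rw [← Real.log_le_log_iff gt (by positivity), Real.log_mul p.ne' gs.ne']
    linarith [this.1]
  · rw [← Real.log_le_log_iff gs (by positivity), Real.log_mul p.ne' gt.ne']
    linarith [this.2]

lemma f_almost_mono (f : ℝ → ℝ) (hf_cont : Continuous f) (hpos : ∀ y, 0 < y → 0 < f y)
    (β : ℝ) (hβ : 0 < β) (hfRV : RVat0 f β) (η : ℝ) (hη : 0 < η) :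
    ∃ δ > 0, ∀ a b, 0 < a → a ≤ b → b ≤ δ → f a ≤ (1 + η) * f b := by
  let H : ℝ → ℝ := fun s => Real.log (f (Real.exp (-s)))
  have hc : Continuous H := by
    refine Continuous.log ?_ (fun s => (hpos _ (Real.exp_pos _)).ne')
    fun_prop
  have hlim : ∀ u, Tendsto (fun s => H (s + u) - H s) atTop (𝓝 (-β * u)) := by
    intro u
    have h0 : Tendsto (fun s : ℝ => Real.exp (-s)) atTop (𝓝[>] 0) := by
      refine tendsto_nhdsWithin_iff.2 ⟨Real.tendsto_exp_neg_atTop_nhds_zero, ?_⟩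
      exact Eventually.of_forall fun s => Real.exp_pos _
    have h1 := (hfRV (Real.exp (-u)) (Real.exp_pos _)).comp h0
    have h2 := h1.log (by positivity)
    rw [Real.log_rpow (Real.exp_pos _), Real.log_exp, mul_neg, ← neg_mul] at h2
    refine h2.congr fun s => ?_
    simp only [Function.comp, H]
    rw [Real.log_div (hpos _ (by positivity)).ne' (hpos _ (by positivity)).ne',
      ← Real.exp_add]
    congr 4
    ring
  obtain ⟨δ, hδ, N, hN⟩ := slow_osc H hc (-β) hlim (Real.log (1 + η)) (Real.log_pos (by linarith))
  have h3 : ∀ᶠ s in atTop, H (s + δ) - H s < 0 := by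
    refine (hlim δ).eventually (gt_mem_nhds ?_)
    nlinarith
  obtain ⟨N', hN'⟩ := eventually_atTop.1 h3
  have hk : ∀ k : ℕ, ∀ s ≥ N', H (s + k * δ) ≤ H s := by
    intro k
    induction k with
    | zero => intro s _; simp
    | succ k ih =>
      intro s hs
      have e1 := ih s hs
      have e2 := hN' (s + k * δ) (by have : 0 ≤ k * δ := by positivity
                                     linarith)
      rw [show s + ((k + 1 : ℕ) : ℝ) * δ = s + k * δ + δ by push_cast; ring]
      linarith
  refine ⟨Real.exp (-(max N N')), Real.exp_pos _, fun a b ha hab hb => ?_⟩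
  have b0 : 0 < b := ha.trans_le hab
  have hs : max N N' ≤ -Real.log b := by
    have := Real.log_le_log b0 hb
    rw [Real.log_exp] at this
    linarith
  have hd : 0 ≤ Real.log b - Real.log a := sub_nonneg.2 (Real.log_le_log ha hab)
  set d := Real.log b - Real.log a with hdd
  set k := ⌊d / δ⌋₊
  have k1 : k * δ ≤ d := by
    rw [← le_div_iff₀ hδ]; exact Nat.floor_le (by positivity)
  have k2 : d ≤ k * δ + δ := by
    have := (Nat.lt_floor_add_one (d / δ)).le
    rw [div_le_iff₀ hδ] at this
    linarith
  have kp : 0 ≤ k * δ := by positivity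
  have e1 := hk k (-Real.log b) ((le_max_right _ _).trans hs)
  have e2 := hN (-Real.log b + k * δ) (by linarith [le_max_left N N']) (d - k * δ)
    (by linarith) (by linarith)
  rw [show -Real.log b + k * δ + (d - k * δ) = -Real.log a by rw [hdd]; ring, abs_le] at e2
  have e3 : H (-Real.log a) ≤ H (-Real.log b) + Real.log (1 + η) := by linarith [e2.2]
  simp only [H, neg_neg] at e3
  rw [Real.exp_log ha, Real.exp_log b0] at e3
  have p : 0 < 1 + η := by linarith
  have fb := hpos b b0
  rw [← Real.log_le_log_iff (hpos a ha) (by positivity), Real.log_mul p.ne' fb.ne']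
  linarith

lemma last_time (φ : ℝ → ℝ) (a b s0 : ℝ) (hφ : ContinuousOn φ (Icc a b)) (h1 : a ≤ s0) (h2 : s0 ≤ b)
    (h3 : φ s0 ≤ 0) :
    ∃ t0, a ≤ t0 ∧ t0 ≤ b ∧ φ t0 ≤ 0 ∧ ∀ t, t0 < t → t ≤ b → 0 < φ t := by
  have hK : IsCompact (Icc a b ∩ φ ⁻¹' Iic 0) :=
    isCompact_Icc.of_isClosed_subset (hφ.preimage_isClosed_of_isClosed isClosed_Icc isClosed_Iic)
      inter_subset_left
  obtain ⟨t0, ht0, hmax⟩ := hK.exists_isGreatest ⟨s0, ⟨h1, h2⟩, h3⟩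
  refine ⟨t0, ht0.1.1, ht0.1.2, ht0.2, fun t ht htb => ?_⟩
  by_contra hc
  exact absurd (hmax ⟨⟨ht0.1.1.trans ht.le, htb⟩, not_lt.1 hc⟩) (not_le.2 ht)

lemma sol_pos (f g x : ℝ → ℝ) (ξ : ℝ) (hf_sign : ∀ y : ℝ, y ≠ 0 → 0 < y * f y) (hf_zero : f 0 = 0)
    (hg_pos : ∀ t : ℝ, 0 < t → 0 < g t) (hξ : 0 < ξ) (hx : IsSol f g ξ x) :
    ∀ t, 0 ≤ t → 0 < x t := by
  obtain ⟨hc, h0, hd⟩ := hx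
  by_contra! hcon
  obtain ⟨t1, ht1, hx1⟩ := hcon
  have hK : IsCompact (Icc 0 t1 ∩ x ⁻¹' Iic 0) :=
    isCompact_Icc.of_isClosed_subset ((hc.mono Icc_subset_Ici_self).preimage_isClosed_of_isClosed
      isClosed_Icc isClosed_Iic) inter_subset_left
  obtain ⟨t0, ⟨⟨ht0, ht01⟩, hxt0⟩, hmin⟩ := hK.exists_isLeast ⟨t1, ⟨ht1, le_rfl⟩, hx1⟩
  have hxt0 : x t0 ≤ 0 := hxt0
  have tp : 0 < t0 := by
    rcases ht0.eq_or_lt with h | h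
    · rw [← h, h0] at hxt0; linarith
    · exact h
  have fle : f (x t0) ≤ 0 := by
    rcases hxt0.eq_or_lt with h | h
    · rw [h, hf_zero]
    · have := hf_sign _ h.ne
      nlinarith
  have hder : 0 < -f (x t0) + g t0 := by linarith [hg_pos t0 tp]
  have hsl := hasDerivAt_iff_tendsto_slope.1 (hd t0 tp)
  have e1 : ∀ᶠ s in 𝓝[<] t0, 0 < slope x t0 s :=
    (hsl.mono_left (nhdsWithin_mono _ (fun s hs => ne_of_lt hs))).eventually (lt_mem_nhds hder)
  have e2 : ∀ᶠ s in 𝓝[<] t0, s ∈ Ioo 0 t0 := Ioo_mem_nhdsLT tp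
  obtain ⟨s, hs1, hs2, hs3⟩ := (e1.and e2).exists
  have : x s ≤ 0 := by
    rw [slope_def_field] at hs1
    have := (div_pos_iff.1 hs1)
    rcases this with h | h <;> linarith [h.1, h.2]
  exact absurd (hmin ⟨⟨hs2.le, (hs3.trans_le ht01).le⟩, this⟩) (not_le.2 hs3)

lemma F_deriv (f F : ℝ → ℝ) (hf_cont : Continuous f) (hpos : ∀ y, 0 < y → 0 < f y)
    (hF : ∀ y : ℝ, 0 < y → F y = ∫ u in y..(1:ℝ), 1 / f u) (y : ℝ) (hy : 0 < y) :
    HasDerivAt F (-(1 / f y)) y := by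
  have hco : ContinuousOn (fun u => 1 / f u) (Ioi 0) :=
    continuousOn_const.div hf_cont.continuousOn (fun u hu => (hpos u hu).ne')
  have hint : IntervalIntegrable (fun u => 1 / f u) volume y 1 := by
    refine (hco.mono ?_).intervalIntegrable
    intro u hu
    exact (lt_min hy one_pos).trans_le hu.1
  have hd := intervalIntegral.integral_hasDerivAt_left hint
    (hco.stronglyMeasurableAtFilter isOpen_Ioi y hy) (hco.continuousAt (Ioi_mem_nhds hy))
  refine hd.congr_of_eventuallyEq ?_
  filter_upwards [Ioi_mem_nhds hy] with z hz using hF z hz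

lemma F_lower (f F : ℝ → ℝ) (hf_cont : Continuous f) (hpos : ∀ y, 0 < y → 0 < f y)
    (hF : ∀ y : ℝ, 0 < y → F y = ∫ u in y..(1:ℝ), 1 / f u)
    (hF_anti : StrictAntiOn F (Set.Ioi 0)) (δ : ℝ)
    (hm : ∀ a b, 0 < a → a ≤ b → b ≤ δ → f a ≤ (1 + 1) * f b) (a : ℝ) (ha : 0 < a)
    (h1 : 2 * a ≤ δ) (h2 : 2 * a ≤ 1) : a / (2 * f (2 * a)) ≤ F a := by
  obtain ⟨c, hc, hce⟩ := exists_hasDerivAt_eq_slope F (fun y => -(1 / f y))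
    (show a < 2 * a by linarith)
    (fun y hy => (F_deriv f F hf_cont hpos hF y (ha.trans_le hy.1)).continuousAt.continuousWithinAt)
    (fun y hy => F_deriv f F hf_cont hpos hF y (ha.trans hy.1))
  have c0 : 0 < c := ha.trans hc.1
  have F0 : 0 ≤ F (2 * a) := by
    have e : F 1 = 0 := by rw [hF 1 one_pos]; simp
    rw [← e]
    exact hF_anti.antitoneOn (show (0:ℝ) < 2 * a by linarith) (show (0:ℝ) < 1 by norm_num) h2
  have e1 := hm c (2 * a) c0 hc.2.le h1
  have fc := hpos c c0
  rw [eq_div_iff (by linarith)] at hce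
  have e2 : a / (2 * f (2 * a)) ≤ a * (1 / f c) := by
    rw [div_eq_mul_one_div]
    refine mul_le_mul_of_nonneg_left (one_div_le_one_div_of_le fc (by linarith)) ha.le
  nlinarith

lemma claimA
    (f g F Finv : ℝ → ℝ) (x : ℝ → ℝ)
    (hf_cont : Continuous f) (hpos : ∀ y, 0 < y → 0 < f y)
    (hg_pos : ∀ t : ℝ, 0 < t → 0 < g t)
    (hF : ∀ y : ℝ, 0 < y → F y = ∫ u in y..(1:ℝ), 1 / f u)
    (hF_anti : StrictAntiOn F (Set.Ioi 0))
    (hFinv : ∀ t : ℝ, 0 ≤ t → 0 < Finv t ∧ F (Finv t) = t)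
    (hFinv_to0 : Tendsto Finv atTop (nhds 0))
    (hxd : ∀ t : ℝ, 0 < t → HasDerivAt x (-f (x t) + g t) t)
    (hxpos : ∀ t, 0 ≤ t → 0 < x t)
    (hLinf : Tendsto (fun t => g t / f (Finv t)) atTop atTop)
    (β : ℝ) (hβ : 1 < β) (hfRV : RVat0 f β)
    (θ : ℝ) (hgRV : RVatInf g (-θ))
    (hx_to0 : Tendsto x atTop (nhds 0)) (η : ℝ) (hη : 0 < η) (r : ℝ) (hr : 1 < r) :
    ∀ᶠ T in atTop, ∃ s, T ≤ s ∧ s ≤ r * T ∧ f (x s) ≤ (1 + η) * g s := by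
  obtain ⟨δ, hδ, hm⟩ := f_almost_mono f hf_cont hpos β (by linarith) hfRV 1 one_pos
  set c := η / (1 + η) with hcdef
  have c0 : 0 < c := by positivity
  set q := c * (r - 1) with hq
  have q0 : 0 < q := mul_pos c0 (by linarith)
  have r0 : 0 < r := by linarith
  set C := (q / r) ^ (-θ) + 1 with hC
  have C0 : 0 < C := by positivity
  have tq : Tendsto (fun T : ℝ => q * T) atTop atTop := tendsto_id.const_mul_atTop q0
  have tr : Tendsto (fun T : ℝ => r * T) atTop atTop := tendsto_id.const_mul_atTop r0
  have E1 := hx_to0.eventually (gt_mem_nhds (show (0:ℝ) < 1 by norm_num))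
  have E2 := (hFinv_to0.comp tq).eventually (gt_mem_nhds hδ)
  have E3 := (hLinf.comp tq).eventually (eventually_ge_atTop (2 * C))
  have E4 := ((hgRV (q / r) (by positivity)).comp tr).eventually
    (gt_mem_nhds (show (q / r) ^ (-θ) < C by rw [hC]; linarith))
  filter_upwards [E1, E2, E3, E4, eventually_gt_atTop 0] with T e1 e2 e3 e4 T0
  simp only [Function.comp] at e2 e3 e4
  by_contra! hcon
  have hTr : T < r * T := by nlinarith
  have rT0 : 0 < r * T := by positivity
  obtain ⟨s, hs, hse⟩ := exists_hasDerivAt_eq_slope (fun t => F (x t))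
    (fun t => -(1 / f (x t)) * (-f (x t) + g t)) hTr
    (fun t ht => by
      have t0 : 0 < t := T0.trans_le ht.1
      exact ((F_deriv f F hf_cont hpos hF _ (hxpos t t0.le)).comp t
        (hxd t t0)).continuousAt.continuousWithinAt)
    (fun t ht => by
      have t0 : 0 < t := T0.trans ht.1
      exact (F_deriv f F hf_cont hpos hF _ (hxpos t t0.le)).comp t (hxd t t0))
  have s0 : 0 < s := T0.trans hs.1
  have fs := hpos _ (hxpos s s0.le)
  have h1 := hcon s hs.1.le hs.2.le
  have h2 : c ≤ -(1 / f (x s)) * (-f (x s) + g s) := by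
    have : -(1 / f (x s)) * (-f (x s) + g s) = 1 - g s / f (x s) := by
      field_simp; ring
    rw [this]
    have : g s / f (x s) ≤ 1 / (1 + η) := by
      rw [div_le_div_iff₀ fs (by positivity)]; linarith
    have hc' : c = 1 - 1 / (1 + η) := by rw [hcdef]; field_simp; ring
    linarith
  rw [hse, le_div_iff₀ (by linarith)] at h2
  have F0 : 0 ≤ F (x T) := by
    have e : F 1 = 0 := by rw [hF 1 one_pos]; simp
    rw [← e]
    exact hF_anti.antitoneOn (hxpos T T0.le) (show (0:ℝ) < 1 by norm_num) e1.le
  have h3 : q * T ≤ F (x (r * T)) := by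
    have : q * T = c * (r * T - T) := by rw [hq]; ring
    linarith
  obtain ⟨y0, hy⟩ := hFinv (q * T) (by positivity)
  have h4 : x (r * T) ≤ Finv (q * T) := by
    rw [← hy] at h3
    exact (hF_anti.le_iff_ge y0 (hxpos _ rT0.le)).1 h3
  have h5 := hm _ _ (hxpos _ rT0.le) h4 e2.le
  have h6 := hcon (r * T) hTr.le le_rfl
  have gr := hg_pos _ rT0
  rw [show q / r * (r * T) = q * T by field_simp, div_lt_iff₀ gr] at e4
  rw [le_div_iff₀ (hpos _ y0)] at e3
  have h7 : C * (2 * f (Finv (q * T))) < C * g (r * T) := by linarith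
  have h8 := lt_of_mul_lt_mul_left h7 C0.le
  nlinarith

set_option maxHeartbeats 2000000 in
lemma claimB
    (f g F Finv : ℝ → ℝ) (x : ℝ → ℝ)
    (hf_cont : Continuous f) (hpos : ∀ y, 0 < y → 0 < f y)
    (hg_pos : ∀ t : ℝ, 0 < t → 0 < g t)
    (hF : ∀ y : ℝ, 0 < y → F y = ∫ u in y..(1:ℝ), 1 / f u)
    (hF_anti : StrictAntiOn F (Set.Ioi 0))
    (hFinv : ∀ t : ℝ, 0 ≤ t → 0 < Finv t ∧ F (Finv t) = t)
    (hFinv_to0 : Tendsto Finv atTop (nhds 0))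
    (hxd : ∀ t : ℝ, 0 < t → HasDerivAt x (-f (x t) + g t) t)
    (hxpos : ∀ t, 0 ≤ t → 0 < x t)
    (hLinf : Tendsto (fun t => g t / f (Finv t)) atTop atTop)
    (β : ℝ) (hβ : 1 < β) (hfRV : RVat0 f β)
    (hx_to0 : Tendsto x atTop (nhds 0)) (η : ℝ) (hη : 0 < η) (r : ℝ) (hr : 1 < r)
    (hg2 : ∀ᶠ t in atTop, ∀ s, t ≤ s → s ≤ r * t → g t ≤ 2 * g s ∧ g s ≤ 2 * g t) :
    ∀ᶠ T in atTop, ∃ s, T ≤ s ∧ s ≤ r * T ∧ (1 - η) * g s ≤ f (x s) := by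
  obtain ⟨δ, hδ, hm⟩ := f_almost_mono f hf_cont hpos β (by linarith) hfRV 1 one_pos
  have r0 : 0 < r := by linarith
  set p := (r - 1) * η / 2 with hp
  have p0 : 0 < p := by have : 0 < r - 1 := by linarith
                        positivity
  obtain ⟨μ, hμ0, hμ⟩ : ∃ μ : ℝ, 0 < μ ∧ 16 * μ ^ (β - 1) ≤ p := by
    refine ⟨(p / 16) ^ (1 / (β - 1)), by positivity, ?_⟩
    rw [← Real.rpow_mul (by positivity), one_div_mul_cancel (by linarith), Real.rpow_one]
    linarith
  set D := (2:ℝ) ^ β + 1 with hD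
  have D0 : 0 < D := by positivity
  have μβ : μ ^ β = μ ^ (β - 1) * μ := by
    rw [← Real.rpow_add_one hμ0.ne']; congr 1; ring
  have w0 : 0 < μ ^ (β - 1) := by positivity
  set w := μ ^ (β - 1)
  set M := 4 * D / (p * μ) with hM
  have tr : Tendsto (fun T : ℝ => r * T) atTop atTop := tendsto_id.const_mul_atTop r0
  have xr : Tendsto (fun T : ℝ => x (r * T)) atTop (𝓝[>] 0) := by
    refine tendsto_nhdsWithin_iff.2 ⟨hx_to0.comp tr, ?_⟩
    filter_upwards [eventually_ge_atTop 0] with T hT using hxpos _ (by positivity)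
  have Fr : Tendsto Finv atTop (𝓝[>] 0) := by
    refine tendsto_nhdsWithin_iff.2 ⟨hFinv_to0, ?_⟩
    filter_upwards [eventually_ge_atTop 0] with T hT using (hFinv _ hT).1
  have E1 := (hx_to0.comp tr).eventually
    (gt_mem_nhds (show (0:ℝ) < min δ 1 / μ by positivity))
  have E2 := hFinv_to0.eventually (gt_mem_nhds (show (0:ℝ) < min δ 1 / 2 by positivity))
  have E3 := hLinf.eventually (eventually_ge_atTop M)
  have E4 := ((hfRV 2 two_pos).comp Fr).eventually
    (gt_mem_nhds (show (2:ℝ) ^ β < D by rw [hD]; linarith))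
  have E5 := ((hfRV μ hμ0).comp xr).eventually
    (gt_mem_nhds (show μ ^ β < 2 * (w * μ) by rw [μβ]; nlinarith [mul_pos w0 hμ0]))
  filter_upwards [E1, E2, E3, E4, E5, hg2, eventually_gt_atTop 0] with T e1 e2 e3 e4 e5 e6 T0
  simp only [Function.comp] at e1 e2 e3 e4 e5
  by_contra! hcon
  have hTr : T < r * T := by nlinarith
  have rT0 : 0 < r * T := by positivity
  obtain ⟨s, hs, hse⟩ := exists_hasDerivAt_eq_slope x
    (fun t => (-f (x t) + g t)) hTr
    (fun t ht => (hxd t (T0.trans_le ht.1)).continuousAt.continuousWithinAt)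
    (fun t ht => hxd t (T0.trans ht.1))
  have h1 := hcon s hs.1.le hs.2.le
  have h2 : η * (g T / 2) ≤ -f (x s) + g s := by
    have := (e6 s hs.1.le hs.2.le).1
    nlinarith
  rw [hse, le_div_iff₀ (by linarith)] at h2
  have X0 := hxpos _ rT0.le
  have xT := hxpos _ T0.le
  have gT := hg_pos T T0
  set X := x (r * T) with hX
  have h3 : p * T * g T ≤ X := by
    have : p * T * g T = η * (g T / 2) * (r * T - T) := by rw [hp]; ring
    linarith
  have fX := hpos X X0
  have h4 : f X ≤ 2 * g T := by
    have h := hcon _ hTr.le le_rfl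
    have h' := (e6 _ hTr.le le_rfl).2
    have := hg_pos _ rT0
    nlinarith
  have h5 : p / 2 * T * f X ≤ X := by
    have : p / 2 * T * f X ≤ p / 2 * T * (2 * g T) := mul_le_mul_of_nonneg_left h4 (by positivity)
    linarith
  obtain ⟨y0, hy⟩ := hFinv T T0.le
  set y := Finv T with hydef
  have fy := hpos y y0
  rw [le_div_iff₀ fy] at e3
  rw [div_lt_iff₀ fy] at e4
  rw [div_lt_iff₀ fX] at e5
  rw [lt_div_iff₀ hμ0] at e1
  have h6 := F_lower f F hf_cont hpos hF hF_anti δ hm y y0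
    (by linarith [min_le_left δ 1]) (by linarith [min_le_right δ 1])
  rw [hy, div_le_iff₀ (by have := hpos (2 * y) (by positivity)
                          positivity)] at h6
  have h7 : y ≤ 2 * D * (T * f y) := by nlinarith
  have h8 : y ≤ μ / 2 * X := by
    have a1 : p * T * (M * f y) ≤ X := (mul_le_mul_of_nonneg_left e3 (by positivity)).trans h3
    have a2 : μ / 2 * (p * T * (M * f y)) = 2 * D * (T * f y) := by
      rw [hM]; field_simp; ring
    have a3 : μ / 2 * (p * T * (M * f y)) ≤ μ / 2 * X :=
      mul_le_mul_of_nonneg_left a1 (by positivity)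
    linarith
  have z0 : 0 < μ / 2 * X := by positivity
  have h9 : F (μ / 2 * X) ≤ T := by
    rw [← hy]
    exact hF_anti.antitoneOn y0 z0 h8
  have h10 := F_lower f F hf_cont hpos hF hF_anti δ hm (μ / 2 * X) z0
    (by linarith [min_le_left δ 1]) (by linarith [min_le_right δ 1])
  rw [show 2 * (μ / 2 * X) = μ * X by ring] at h10
  have fm := hpos (μ * X) (by positivity)
  have h11 := h10.trans h9
  rw [div_le_iff₀ (by positivity)] at h11
  have h12 : μ / 2 * X < T * (2 * (2 * (w * μ) * f X)) := by
    refine h11.trans_lt (mul_lt_mul_of_pos_left (by linarith) T0)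
  have h13 : μ / 2 * (p / 2 * T * f X) ≤ μ / 2 * X := mul_le_mul_of_nonneg_left h5 (by positivity)
  have h14 : (16 * w) * (μ * T * f X) ≤ p * (μ * T * f X) :=
    mul_le_mul_of_nonneg_right hμ (by positivity)
  nlinarith

/-- Theorem 2.5(i) (Theorem `fxtgt1`, part (i)): under the base hypotheses, if
`g(t)/(f∘F⁻¹)(t) → +∞`, `f ∈ RV₀(β)` with `β > 1`, `g ∈ RV_∞(-θ)` with `θ > 0`,
and the solution `x` of `x' = -f(x) + g`, `x(0) = ξ > 0`, satisfies `x(t) → 0`,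
then `f(x(t))/g(t) → 1`. -/
theorem stmt_5
    (f g F Finv : ℝ → ℝ) (ξ : ℝ) (x : ℝ → ℝ)
    (hf_cont : Continuous f) (hf_lip : LocallyLipschitz f)
    (hf_sign : ∀ y : ℝ, y ≠ 0 → 0 < y * f y) (hf_zero : f 0 = 0)
    (hg_cont : ContinuousOn g (Set.Ici 0)) (hg_pos : ∀ t : ℝ, 0 < t → 0 < g t)
    (hF : ∀ y : ℝ, 0 < y → F y = ∫ u in y..(1:ℝ), 1 / f u)
    (hF_top : Tendsto F (nhdsWithin 0 (Set.Ioi 0)) atTop)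
    (hF_anti : StrictAntiOn F (Set.Ioi 0))
    (hFinv : ∀ t : ℝ, 0 ≤ t → 0 < Finv t ∧ F (Finv t) = t)
    (hFinv_to0 : Tendsto Finv atTop (nhds 0))
    (hξ : 0 < ξ) (hx : IsSol f g ξ x)
    (hLinf : Tendsto (fun t => g t / f (Finv t)) atTop atTop)
    (β : ℝ) (hβ : 1 < β) (hfRV : RVat0 f β)
    (θ : ℝ) (hθ : 0 < θ) (hgRV : RVatInf g (-θ))
    (hx_to0 : Tendsto x atTop (nhds 0)) :
    Tendsto (fun t => f (x t) / g t) atTop (nhds 1) := by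
  have hpos : ∀ y, 0 < y → 0 < f y := fun y hy => by
    have := hf_sign y hy.ne'
    exact (mul_pos_iff_of_pos_left hy).1 this
  have hxpos := sol_pos f g x ξ hf_sign hf_zero hg_pos hξ hx
  obtain ⟨hxc, -, hxd⟩ := hx
  have hfx : ContinuousOn (fun t => f (x t)) (Ici 0) := hf_cont.comp_continuousOn hxc
  have key : ∀ η, 0 < η → η < 1 → ∀ᶠ t in atTop,
      f (x t) ≤ (1 + η) ^ 3 * g t ∧ (1 - η) * g t ≤ (1 + η) ^ 2 * f (x t) := by
    intro η hη hη1
    obtain ⟨r, hr, hgs⟩ := g_slow g hg_cont hg_pos θ hgRV η hη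
    obtain ⟨δ, hδ, hm⟩ := f_almost_mono f hf_cont hpos β (by linarith) hfRV η hη
    have hA := claimA f g F Finv x hf_cont hpos hg_pos hF hF_anti hFinv hFinv_to0 hxd hxpos hLinf
      β hβ hfRV θ hgRV hx_to0 η hη r hr
    have hg2 : ∀ᶠ t in atTop, ∀ s, t ≤ s → s ≤ r * t → g t ≤ 2 * g s ∧ g s ≤ 2 * g t := by
      filter_upwards [hgs, eventually_gt_atTop 0] with t ht t0 s h1 h2
      have := ht s h1 h2
      have := hg_pos t t0
      have := hg_pos s (by linarith)
      constructor <;> nlinarith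
    have hB := claimB f g F Finv x hf_cont hpos hg_pos hF hF_anti hFinv hFinv_to0 hxd hxpos hLinf
      β hβ hfRV hx_to0 η hη r hr hg2
    have hxδ := hx_to0.eventually (gt_mem_nhds hδ)
    have r0 : 0 < r := by linarith
    have td : Tendsto (fun t : ℝ => t / r) atTop atTop := tendsto_id.atTop_div_const r0
    have hall := (hgs.and hxδ).and (eventually_gt_atTop 0)
    filter_upwards [td.eventually hA, td.eventually hB,
      td.eventually (eventually_forall_ge_atTop.2 hall)] with t1 a1 a2 a3
    rw [mul_div_cancel₀ _ r0.ne'] at a1 a2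
    have T0 : 0 < t1 / r := (a3 _ le_rfl).2
    have sub : Icc (t1 / r) t1 ⊆ Ici 0 := fun s hs => T0.le.trans hs.1
    have p1 : 0 < 1 + η := by linarith
    have scale : ∀ t0, t1 / r ≤ t0 → t1 ≤ r * t0 := fun t0 h => by
      rw [div_le_iff₀ r0] at h; linarith
    constructor
    · obtain ⟨s, hs1, hs2, hs3⟩ := a1
      obtain ⟨t0, b1, b2, b3, b4⟩ := last_time (fun t => f (x t) - (1 + η) * g t) (t1 / r) t1 s
        ((hfx.mono sub).sub (continuousOn_const.mul (hg_cont.mono sub))) hs1 hs2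
        (by linarith)
      have t00 : 0 < t0 := T0.trans_le b1
      have hle : x t1 ≤ x t0 := by
        rcases b2.eq_or_lt with h | h
        · rw [h]
        obtain ⟨c, hc, hce⟩ := exists_hasDerivAt_eq_slope x (fun t => (-f (x t) + g t)) h
          (fun t ht => (hxd t (t00.trans_le ht.1)).continuousAt.continuousWithinAt)
          (fun t ht => hxd t (t00.trans ht.1))
        have h1 := b4 c hc.1 hc.2.le
        have h2 := hg_pos c (t00.trans hc.1)
        rw [eq_div_iff (by linarith)] at hce
        have h3 : -f (x c) + g c ≤ 0 := by nlinarith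
        nlinarith
      have c1 := hm _ _ (hxpos t1 (by linarith)) hle (a3 t0 b1).1.2.le
      have c2 := ((a3 t0 b1).1.1 t1 b2 (scale t0 b1)).1
      calc f (x t1) ≤ (1 + η) * f (x t0) := c1
        _ ≤ (1 + η) * ((1 + η) * g t0) := by gcongr; linarith
        _ ≤ (1 + η) * ((1 + η) * ((1 + η) * g t1)) := by gcongr
        _ = _ := by ring
    · obtain ⟨s, hs1, hs2, hs3⟩ := a2
      obtain ⟨t0, b1, b2, b3, b4⟩ := last_time (fun t => (1 - η) * g t - f (x t)) (t1 / r) t1 s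
        ((continuousOn_const.mul (hg_cont.mono sub)).sub (hfx.mono sub)) hs1 hs2
        (by linarith)
      have t00 : 0 < t0 := T0.trans_le b1
      have hle : x t0 ≤ x t1 := by
        rcases b2.eq_or_lt with h | h
        · rw [h]
        obtain ⟨c, hc, hce⟩ := exists_hasDerivAt_eq_slope x (fun t => (-f (x t) + g t)) h
          (fun t ht => (hxd t (t00.trans_le ht.1)).continuousAt.continuousWithinAt)
          (fun t ht => hxd t (t00.trans ht.1))
        have h1 := b4 c hc.1 hc.2.le
        have h2 := hg_pos c (t00.trans hc.1)
        rw [eq_div_iff (by linarith)] at hce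
        have h3 : 0 ≤ -f (x c) + g c := by nlinarith
        nlinarith
      have c1 := hm _ _ (hxpos t0 t00.le) hle (a3 t1 (b1.trans b2)).1.2.le
      have c2 := ((a3 t0 b1).1.1 t1 b2 (scale t0 b1)).2
      have q1 : 0 < 1 - η := by linarith
      calc (1 - η) * g t1 ≤ (1 - η) * ((1 + η) * g t0) := by gcongr
        _ = (1 + η) * ((1 - η) * g t0) := by ring
        _ ≤ (1 + η) * f (x t0) := by gcongr; linarith
        _ ≤ (1 + η) * ((1 + η) * f (x t1)) := by gcongr
        _ = _ := by ring
  have small : ∀ᶠ η : ℝ in 𝓝[>] 0, 0 < η ∧ η < 1 := Ioo_mem_nhdsGT one_pos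
  rw [tendsto_order]
  constructor
  · intro a ha
    have hl : Tendsto (fun η : ℝ => (1 - η) / (1 + η) ^ 2) (𝓝[>] 0) (𝓝 1) := by
      have : ContinuousAt (fun η : ℝ => (1 - η) / (1 + η) ^ 2) 0 :=
        ContinuousAt.div (by fun_prop) (by fun_prop) (by norm_num)
      have h := this.tendsto.mono_left (nhdsWithin_le_nhds (s := Ioi 0))
      simpa using h
    obtain ⟨η, h1, h2, h3⟩ := ((hl.eventually (lt_mem_nhds ha)).and small).exists
    filter_upwards [key η h2 h3, eventually_gt_atTop 0] with t ht t0
    refine h1.trans_le ?_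
    rw [div_le_div_iff₀ (by positivity) (hg_pos t t0)]
    linarith [ht.2]
  · intro a ha
    have hl : Tendsto (fun η : ℝ => (1 + η) ^ 3) (𝓝[>] 0) (𝓝 1) := by
      have : ContinuousAt (fun η : ℝ => (1 + η) ^ 3) 0 := by fun_prop
      have h := this.tendsto.mono_left (nhdsWithin_le_nhds (s := Ioi 0))
      simpa using h
    obtain ⟨η, h1, h2, h3⟩ := ((hl.eventually (gt_mem_nhds ha)).and small).exists
    filter_upwards [key η h2 h3, eventually_gt_atTop 0] with t ht t0
    refine lt_of_le_of_lt ?_ h1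
    rw [div_le_iff₀ (hg_pos t t0)]
    exact ht.1
end
end
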